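/- arXiv:1206.5512 — 3 statements merged into one kernel-verified Lean document; each statement's English description precedes it below -/
import Mathlib

section
/- Let A be an invertible n×n complex matrix, x0, b ∈ ℂⁿ, r0 = b − A·x0 with β = ‖r0‖ ≠ 0. Let V be an n×(j+1) complex matrix with orthonormal columns whose first column is r0/β, let Vj be its first j columns, and let H̄ = (h_{i,l}) be a (j+1)×j complex matrix that is upper Hessenberg (h_{i,l} = 0 whenever i > l+1) such that A·Vj = V·H̄ and h_{i+1,i} ≠ 0 for all i = 1,…,j−1. Then there exists y ∈ ℂʲ with A(x0 + Vj·y) = b (i.e. the GMRES iterate at step j solves the system exactly) if and only if h_{j+1,j} = 0. -/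
open Matrix

/-- Euclidean (ℓ²) norm of a complex vector. -/
noncomputable def vecNorm {n : ℕ} (v : Fin n → ℂ) : ℝ :=
  ‖(WithLp.equiv 2 (Fin n → ℂ)).symm v‖

/-- Operator (spectral) norm of a complex matrix, induced by the Euclidean vector norm. -/
noncomputable def matNorm {m n : ℕ} (A : Matrix (Fin m) (Fin n) ℂ) : ℝ :=
  sSup ((fun y => vecNorm (A.mulVec y)) '' {y | vecNorm y ≤ 1})

/-- Smallest singular value of a (tall) complex matrix:
`σ_min(B) = inf {‖B·y‖ : ‖y‖ = 1}`. -/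
noncomputable def sigMin {p q : ℕ} (B : Matrix (Fin p) (Fin q) ℂ) : ℝ :=
  sInf ((fun y => vecNorm (B.mulVec y)) '' {y | vecNorm y = 1})

/-- The leading (j+1)×j submatrix of a (m+1)×m matrix. -/
def lead {m : ℕ} (H : Matrix (Fin (m + 1)) (Fin m) ℂ) (j : ℕ) (hj : j ≤ m) :
    Matrix (Fin (j + 1)) (Fin j) ℂ :=
  fun i l => H (Fin.castLE (Nat.succ_le_succ hj) i) (Fin.castLE hj l)

/-!
Expanding `A (x₀ + Vⱼ y) = b` in the independent columns of `V` turns it into the Hessenberg system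
`H y = β e₁`, which has one more equation than unknowns.

If `h_{j+1,j} ≠ 0`, the last `j` equations form a homogeneous triangular system with nonzero
diagonal, so `y = 0`, against `β ≠ 0` in the first equation. If `h_{j+1,j} = 0`, the last equation
is `0 = 0` and the remaining square system is injective because `A` and `Vⱼ` are, hence solvable.
-/

/-- Upper Hessenberg matrices: every entry below the first subdiagonal vanishes. The matrix may be
rectangular; the Arnoldi process produces one with a row more than it has columns. -/
def IsUpperHessenberg {R : Type*} [Zero R] {m n : ℕ} (H : Matrix (Fin m) (Fin n) R) : Prop :=
  ∀ (i : Fin m) (l : Fin n), (l : ℕ) + 1 < (i : ℕ) → H i l = 0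

/-- The Arnoldi relation `A Vⱼ = V H`, where the family `v` lists the columns of `V` and `Vⱼ` omits
the last of them. It is stated column by column, so that `A` may act on any module. -/
def IsArnoldiRelation {R E : Type*} [CommSemiring R] [AddCommMonoid E] [Module R E] {j : ℕ}
    (A : E →ₗ[R] E) (v : Fin (j + 1) → E) (H : Matrix (Fin (j + 1)) (Fin j) R) : Prop :=
  ∀ l : Fin j, A (v l.castSucc) = ∑ i, H i l • v i

theorem mulVec_injective_of_mul_eq_one {R m n : Type*} [Semiring R] [Fintype m] [Fintype n]
    [DecidableEq n] {M : Matrix m n R} {N : Matrix n m R} (hNM : N * M = 1) :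
    Function.Injective M.mulVec :=
  Function.LeftInverse.injective (g := N.mulVec) fun x ↦ by rw [mulVec_mulVec, hNM, one_mulVec]

theorem mulVec_eq_sum_smul_col {R m n : Type*} [CommSemiring R] [Fintype n] (M : Matrix m n R)
    (y : n → R) : M *ᵥ y = ∑ l, y l • M.col l := by
  ext i
  simp only [mulVec, dotProduct, Finset.sum_apply, Pi.smul_apply, col_apply, smul_eq_mul, mul_comm]

theorem exists_mulVec_eq_of_row_last_eq_zero {K : Type*} [Field K] {j : ℕ}
    {H : Matrix (Fin (j + 1)) (Fin j) K} (hinj : Function.Injective H.mulVec)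
    (hrow : H.row (Fin.last j) = 0) {c : Fin (j + 1) → K} (hc : c (Fin.last j) = 0) :
    ∃ y, H *ᵥ y = c := by
  have mulVec_last (y : Fin j → K) : (H *ᵥ y) (Fin.last j) = 0 :=
    (congrArg (· ⬝ᵥ y) hrow).trans (zero_dotProduct y)
  have top_injective : Function.Injective (H.submatrix Fin.castSucc id).mulVec := by
    intro y z hyz
    apply hinj
    ext i
    cases i using Fin.lastCases with
    | last => rw [mulVec_last, mulVec_last]
    | cast i => exact congrFun hyz i
  have top_surjective : Function.Surjective (H.submatrix Fin.castSucc id).mulVec :=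
    mulVec_surjective_iff_isUnit.2 (mulVec_injective_iff_isUnit.1 top_injective)
  obtain ⟨y, hy⟩ := top_surjective (c ∘ Fin.castSucc)
  refine ⟨y, funext fun i ↦ ?_⟩
  cases i using Fin.lastCases with
  | last => rw [mulVec_last, hc]
  | cast i => exact congrFun hy i

namespace IsUpperHessenberg

theorem isUpperTriangular_submatrix_succ {R : Type*} [Zero R] {j : ℕ}
    {H : Matrix (Fin (j + 1)) (Fin j) R} (hH : IsUpperHessenberg H) :
    (H.submatrix Fin.succ id).IsUpperTriangular :=
  fun i l hli ↦ hH i.succ l (Nat.succ_lt_succ hli)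

theorem mulVec_ne_single_zero {R : Type*} [CommRing R] [IsDomain R] {j : ℕ}
    {H : Matrix (Fin (j + 1)) (Fin j) R} (hH : IsUpperHessenberg H)
    (hsub : ∀ i : Fin j, H i.succ i ≠ 0) {β : R} (hβ : β ≠ 0) (y : Fin j → R) :
    H *ᵥ y ≠ Pi.single 0 β := by
  intro hy
  have det_ne_zero : (H.submatrix Fin.succ id).det ≠ 0 := by
    rw [det_of_isUpperTriangular hH.isUpperTriangular_submatrix_succ]
    exact Finset.prod_ne_zero_iff.2 fun i _ ↦ hsub i
  have lower_rows : H.submatrix Fin.succ id *ᵥ y = 0 :=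
    funext fun i ↦ (congrFun hy i.succ).trans (Pi.single_eq_of_ne i.succ_ne_zero β)
  have y_eq_zero : y = 0 := eq_zero_of_mulVec_eq_zero det_ne_zero lower_rows
  apply hβ
  calc
    β = (H *ᵥ y) 0 := by rw [hy, Pi.single_eq_same]
    _ = 0 := by rw [y_eq_zero, mulVec_zero, Pi.zero_apply]

theorem row_last_eq_zero {R : Type*} [Zero R] {m : ℕ} {H : Matrix (Fin (m + 2)) (Fin (m + 1)) R}
    (hH : IsUpperHessenberg H) (hlast : H (Fin.last (m + 1)) (Fin.last m) = 0) :
    H.row (Fin.last (m + 1)) = 0 := by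
  ext l
  cases l using Fin.lastCases with
  | last => exact hlast
  | cast l => exact hH _ _ (Nat.succ_lt_succ l.isLt)

theorem exists_mulVec_eq_single_zero_iff {K : Type*} [Field K] {m : ℕ}
    {H : Matrix (Fin (m + 2)) (Fin (m + 1)) K} (hH : IsUpperHessenberg H)
    (hsub : ∀ i : Fin m, H i.castSucc.succ i.castSucc ≠ 0) (hinj : Function.Injective H.mulVec)
    {β : K} (hβ : β ≠ 0) :
    (∃ y, H *ᵥ y = Pi.single 0 β) ↔ H (Fin.last (m + 1)) (Fin.last m) = 0 := by
  constructor
  · rintro ⟨y, hy⟩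
    by_contra hlast
    exact hH.mulVec_ne_single_zero (Fin.lastCases hlast hsub) hβ y hy
  · intro hlast
    exact exists_mulVec_eq_of_row_last_eq_zero hinj (hH.row_last_eq_zero hlast)
      (Pi.single_eq_of_ne Fin.last_pos.ne' β)

end IsUpperHessenberg

namespace IsArnoldiRelation

section Semiring

variable {R E : Type*} [CommSemiring R] [AddCommMonoid E] [Module R E] {j : ℕ}
  {A : E →ₗ[R] E} {v : Fin (j + 1) → E} {H : Matrix (Fin (j + 1)) (Fin j) R}

theorem map_sum_smul (h : IsArnoldiRelation A v H) (y : Fin j → R) :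
    A (∑ l, y l • v l.castSucc) = ∑ i, (H *ᵥ y) i • v i :=
  calc
    A (∑ l, y l • v l.castSucc) = ∑ l, ∑ i, (H i l * y l) • v i := by
      simp only [map_sum, map_smul, h _, Finset.smul_sum, smul_smul, mul_comm]
    _ = ∑ i, (H *ᵥ y) i • v i := by
      rw [Finset.sum_comm]
      simp only [mulVec, dotProduct, Finset.sum_smul]

theorem mulVec_injective (h : IsArnoldiRelation A v H) (hA : Function.Injective A)
    (hv : LinearIndependent R fun l : Fin j ↦ v l.castSucc) : Function.Injective H.mulVec := by
  intro y z hyz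
  apply hv.fintypeLinearCombination_injective
  apply hA
  simp only [Fintype.linearCombination_apply, h.map_sum_smul, hyz]

end Semiring

theorem map_add_sum_smul_eq_iff {R E : Type*} [CommRing R] [AddCommGroup E] [Module R E] {j : ℕ}
    {A : E →ₗ[R] E} {v : Fin (j + 1) → E} {H : Matrix (Fin (j + 1)) (Fin j) R}
    (h : IsArnoldiRelation A v H) (hv : LinearIndependent R v) {x₀ b : E} {β : R}
    (hr : b - A x₀ = β • v 0) (y : Fin j → R) :
    A (x₀ + ∑ l, y l • v l.castSucc) = b ↔ H *ᵥ y = Pi.single 0 β :=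
  calc
    A (x₀ + ∑ l, y l • v l.castSucc) = b ↔ ∑ i, (H *ᵥ y) i • v i = β • v 0 := by
      rw [map_add, h.map_sum_smul, ← hr, eq_sub_iff_add_eq']
    _ ↔ Fintype.linearCombination R v (H *ᵥ y) =
        Fintype.linearCombination R v (Pi.single 0 β) := by
      rw [Fintype.linearCombination_apply, Fintype.linearCombination_apply_single]
    _ ↔ H *ᵥ y = Pi.single 0 β := hv.fintypeLinearCombination_injective.eq_iff

end IsArnoldiRelation

theorem isArnoldiRelation_mulVecLin_col {R ι : Type*} [CommSemiring R] [Fintype ι] {j : ℕ}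
    {A : Matrix ι ι R} {V : Matrix ι (Fin (j + 1)) R} {H : Matrix (Fin (j + 1)) (Fin j) R}
    (h : A * V.submatrix id Fin.castSucc = V * H) : IsArnoldiRelation A.mulVecLin V.col H := by
  intro l
  calc
    A *ᵥ V.col l.castSucc = V *ᵥ H.col l := congrFun (congrArg Matrix.col h) l
    _ = ∑ i, H i l • V.col i := mulVec_eq_sum_smul_col V (H.col l)

theorem gmres_exact_iff_breakdown_general {K E : Type*} [Field K] [AddCommGroup E] [Module K E]
    {m : ℕ} {A : E →ₗ[K] E} (hA : Function.Injective A) {x₀ b : E} {β : K} (hβ : β ≠ 0)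
    {v : Fin (m + 2) → E} (hv : LinearIndependent K v) (hr : b - A x₀ = β • v 0)
    {H : Matrix (Fin (m + 2)) (Fin (m + 1)) K} (hH : IsUpperHessenberg H)
    (hArnoldi : IsArnoldiRelation A v H)
    (hsub : ∀ i : Fin m, H i.castSucc.succ i.castSucc ≠ 0) :
    (∃ y : Fin (m + 1) → K, A (x₀ + ∑ l, y l • v l.castSucc) = b) ↔
      H (Fin.last (m + 1)) (Fin.last m) = 0 := by
  have hinj : Function.Injective H.mulVec :=
    hArnoldi.mulVec_injective hA (hv.comp _ (Fin.castSucc_injective _))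
  simp only [hArnoldi.map_add_sum_smul_eq_iff hv hr]
  exact hH.exists_mulVec_eq_single_zero_iff hsub hinj hβ

/-- the GMRES iterate at step j is an exact solution iff
`h_{j+1,j} = 0` (for an unreduced upper-Hessenberg Arnoldi relation). -/
theorem gmres_exact_iff_breakdown (n j : ℕ) (hj : 0 < j)
    (A : Matrix (Fin n) (Fin n) ℂ) (hA : IsUnit A)
    (x0 b r0 : Fin n → ℂ) (hr0 : r0 = b - A.mulVec x0)
    (β : ℝ) (hβdef : β = vecNorm r0) (hβ : β ≠ 0)
    (V : Matrix (Fin n) (Fin (j + 1)) ℂ) (hV : Vᴴ * V = 1)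
    (hv1 : ∀ i, V i 0 = r0 i / (β : ℂ))
    (Vj : Matrix (Fin n) (Fin j) ℂ) (hVj : Vj = V.submatrix id Fin.castSucc)
    (H : Matrix (Fin (j + 1)) (Fin j) ℂ)
    (hHess : ∀ (i : Fin (j + 1)) (l : Fin j), (l : ℕ) + 1 < (i : ℕ) → H i l = 0)
    (hArnoldi : A * Vj = V * H)
    (hsub : ∀ i : Fin j, (i : ℕ) + 1 < j → H i.succ i ≠ 0) :
    (∃ y : Fin j → ℂ, A.mulVec (x0 + Vj.mulVec y) = b) ↔
      H (Fin.last j) ⟨j - 1, by omega⟩ = 0 := by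
  obtain ⟨m, rfl⟩ : ∃ m, j = m + 1 := ⟨j - 1, by omega⟩
  subst hVj
  have hβ' : (β : ℂ) ≠ 0 := Complex.ofReal_ne_zero.2 hβ
  have hr : b - A.mulVecLin x0 = (β : ℂ) • V.col 0 := by
    ext i
    simp [hv1, hr0, mul_div_cancel₀ _ hβ']
  simp only [mulVec_eq_sum_smul_col (V.submatrix id Fin.castSucc)]
  exact gmres_exact_iff_breakdown_general (mulVec_injective_of_isUnit hA) hβ'
    (mulVec_injective_iff.1 (mulVec_injective_of_mul_eq_one hV)) hr hHess
    (isArnoldiRelation_mulVecLin_col hArnoldi)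
    fun i ↦ hsub i.castSucc (Nat.succ_lt_succ i.isLt)
end

section
/- Let f : ℝ → ℂ be a twice continuously differentiable function that is periodic with period 2, and let R be a positive integer. Suppose all low-frequency Fourier coefficients of f vanish: ∫_{−1}^{1} f(x)·e^{−iπmx} dx = 0 for every integer m with |m| ≤ R. Then the L² norm of the second derivative dominates the L² norm of f with factor π²R²: (∫_{−1}^{1} |f''(x)|² dx)^{1/2} ≥ π²·R² · (∫_{−1}^{1} |f(x)|² dx)^{1/2}. -/
open intervalIntegral

/-!
On `[a, b]`, integrating by parts `k` times with boundary terms that cancel multiplies the `n`-th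
Fourier coefficient of `f` by `(2πin / (b - a)) ^ k`. Where that coefficient does not vanish,
`|n| ≥ R`, so the factor has modulus at least `(2πR / (b - a)) ^ k`; Parseval's identity turns this
bound on coefficients into a bound on `L²` norms.
-/

open MeasureTheory Set

theorem memLp_restrict_of_continuousOn_of_isCompact {X E : Type*} [TopologicalSpace X]
    [MeasurableSpace X] [OpensMeasurableSpace X] [NormedAddCommGroup E] {μ : Measure X}
    [IsFiniteMeasureOnCompacts μ] {f : X → E} {s : Set X}
    (hf : ContinuousOn f s) (hs : IsCompact s) (hs' : MeasurableSet s) (p : ENNReal) :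
    MemLp f p (μ.restrict s) := by
  have : IsFiniteMeasure (μ.restrict s) := isFiniteMeasure_restrict.2 hs.measure_ne_top
  obtain ⟨C, hC⟩ := hs.exists_bound_of_continuousOn hf
  exact .of_bound (hf.aestronglyMeasurable_of_isCompact hs hs') C (ae_restrict_of_forall_mem hs' hC)

theorem iteratedDeriv_periodic {𝕜 E : Type*} [NontriviallyNormedField 𝕜] [NormedAddCommGroup E]
    [NormedSpace 𝕜 E] {f : 𝕜 → E} {T : 𝕜} (hf : Function.Periodic f T) (k : ℕ) :
    Function.Periodic (iteratedDeriv k f) T := fun x ↦ by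
  rw [← congrFun (iteratedDeriv_comp_add_const k f T) x, hf.funext]

section Interval

variable {a b : ℝ}

theorem fourierCoeffOn_eq_integral_mul_exp (hab : a < b) (f : ℝ → ℂ) (n : ℤ) :
    fourierCoeffOn hab f n = (b - a : ℂ)⁻¹ * ∫ x in a..b,
      f x * Complex.exp (-(Complex.I * (2 * Real.pi / (b - a) : ℝ) * n * x)) := by
  have hcharacter (x : ℝ) : fourier (-n) (x : AddCircle (b - a)) =
      Complex.exp (-(Complex.I * (2 * Real.pi / (b - a) : ℝ) * n * x)) := by
    rw [fourier_coe_apply]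
    congr 1
    push_cast
    ring
  simp [fourierCoeffOn_eq_integral, hcharacter, mul_comm (Complex.exp _)]

theorem fourierCoeffOn_deriv_of_eq_endpoints (hab : a < b) {f f' : ℝ → ℂ}
    (hf : ∀ x ∈ uIcc a b, HasDerivAt f (f' x) x) (hf' : IntervalIntegrable f' volume a b)
    (hends : f a = f b) (n : ℤ) :
    fourierCoeffOn hab f' n =
      2 * Real.pi * Complex.I * n / (b - a) * fourierCoeffOn hab f n := by
  rcases eq_or_ne n 0 with rfl | hn
  · simp [fourierCoeffOn_eq_integral, integral_eq_sub_of_hasDerivAt hf hf', hends]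
  · have hlength : (b - a : ℂ) ≠ 0 := mod_cast (sub_pos.2 hab).ne'
    have hn' : (n : ℂ) ≠ 0 := mod_cast hn
    have hpi : (Real.pi : ℂ) ≠ 0 := mod_cast Real.pi_ne_zero
    rw [fourierCoeffOn_of_hasDerivAt hab hn hf hf', hends]
    field_simp [Complex.I_ne_zero]
    ring

theorem fourierCoeffOn_iteratedDeriv (hab : a < b) {f : ℝ → ℂ} {k : ℕ} (hf : ContDiff ℝ k f)
    (hends : ∀ j < k, iteratedDeriv j f a = iteratedDeriv j f b) (n : ℤ) :
    fourierCoeffOn hab (iteratedDeriv k f) n =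
      (2 * Real.pi * Complex.I * n / (b - a)) ^ k * fourierCoeffOn hab f n := by
  induction k with
  | zero => simp
  | succ k ih =>
    have hderiv (x : ℝ) : HasDerivAt (iteratedDeriv k f) (iteratedDeriv (k + 1) f x) x := by
      rw [iteratedDeriv_succ]
      exact (hf.differentiable_iteratedDeriv' k x).hasDerivAt
    rw [fourierCoeffOn_deriv_of_eq_endpoints hab (fun x _ ↦ hderiv x)
        ((hf.continuous_iteratedDeriv' (k + 1)).intervalIntegrable a b) (hends k k.lt_succ_self),
      ih (hf.of_le (mod_cast k.le_succ)) (fun j hj ↦ hends j (hj.trans k.lt_succ_self)),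
      pow_succ', ← mul_assoc]

theorem norm_fourierCoeffOn_iteratedDeriv (hab : a < b) {f : ℝ → ℂ} {k : ℕ}
    (hf : ContDiff ℝ k f) (hends : ∀ j < k, iteratedDeriv j f a = iteratedDeriv j f b) (n : ℤ) :
    ‖fourierCoeffOn hab (iteratedDeriv k f) n‖ =
      (2 * Real.pi / (b - a) * |(n : ℝ)|) ^ k * ‖fourierCoeffOn hab f n‖ := by
  have hlength : ‖(b - a : ℂ)‖ = b - a := by
    rw [← Complex.ofReal_sub, Complex.norm_of_nonneg (sub_pos.2 hab).le]
  rw [fourierCoeffOn_iteratedDeriv hab hf hends, norm_mul, norm_pow, norm_div, hlength]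
  simp [abs_of_pos Real.pi_pos, mul_div_right_comm]

theorem mul_sqrt_integral_norm_sq_le_of_fourierCoeffOn (hab : a < b) {f g : ℝ → ℂ}
    (hf : MemLp f 2 (volume.restrict (Ioc a b))) (hg : MemLp g 2 (volume.restrict (Ioc a b)))
    {c : ℝ} (hc : 0 ≤ c)
    (hcoeff : ∀ n, c * ‖fourierCoeffOn hab f n‖ ≤ ‖fourierCoeffOn hab g n‖) :
    c * √(∫ x in a..b, ‖f x‖ ^ 2) ≤ √(∫ x in a..b, ‖g x‖ ^ 2) := by
  have hcoeff_sq (n : ℤ) :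
      c ^ 2 * ‖fourierCoeffOn hab f n‖ ^ 2 ≤ ‖fourierCoeffOn hab g n‖ ^ 2 := by
    rw [← mul_pow]
    exact pow_le_pow_left₀ (by positivity) (hcoeff n) 2
  have hparseval : c ^ 2 * ((b - a)⁻¹ * ∫ x in a..b, ‖f x‖ ^ 2) ≤
      (b - a)⁻¹ * ∫ x in a..b, ‖g x‖ ^ 2 :=
    hasSum_le hcoeff_sq ((hasSum_sq_fourierCoeffOn hab hf).mul_left _)
      (hasSum_sq_fourierCoeffOn hab hg)
  rw [mul_left_comm, mul_le_mul_iff_right₀ (inv_pos.2 (sub_pos.2 hab))] at hparseval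
  calc c * √(∫ x in a..b, ‖f x‖ ^ 2)
      = √(c ^ 2 * ∫ x in a..b, ‖f x‖ ^ 2) := by
        rw [Real.sqrt_mul (sq_nonneg c), Real.sqrt_sq hc]
    _ ≤ √(∫ x in a..b, ‖g x‖ ^ 2) := Real.sqrt_le_sqrt hparseval

theorem second_deriv_dominates_high_frequency_general (hab : a < b) {f : ℝ → ℂ} {k : ℕ}
    (hf : ContDiff ℝ k f) (hends : ∀ j < k, iteratedDeriv j f a = iteratedDeriv j f b) {R : ℕ}
    (hlow : ∀ m : ℤ, |m| < R → fourierCoeffOn hab f m = 0) :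
    (2 * Real.pi / (b - a) * R) ^ k * √(∫ x in a..b, ‖f x‖ ^ 2) ≤
      √(∫ x in a..b, ‖iteratedDeriv k f x‖ ^ 2) := by
  have := sub_pos.2 hab
  have hmemLp {g : ℝ → ℂ} (hg : Continuous g) : MemLp g 2 (volume.restrict (Ioc a b)) :=
    (memLp_restrict_of_continuousOn_of_isCompact hg.continuousOn isCompact_Icc
      measurableSet_Icc 2).mono_measure (Measure.restrict_mono Ioc_subset_Icc_self le_rfl)
  refine mul_sqrt_integral_norm_sq_le_of_fourierCoeffOn hab (hmemLp hf.continuous)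
    (hmemLp (hf.continuous_iteratedDeriv' k)) (by positivity) fun n ↦ ?_
  rcases lt_or_ge |n| (R : ℤ) with hn | hn
  · simp [hlow n hn]
  · have hn' : (R : ℝ) ≤ |(n : ℝ)| := mod_cast hn
    rw [norm_fourierCoeffOn_iteratedDeriv hab hf hends]
    gcongr

end Interval

/-- if all Fourier coefficients of a 2-periodic C² function `f`
with frequencies `|m| ≤ R` vanish, then
`‖f''‖_{L²(−1,1)} ≥ π²R² ‖f‖_{L²(−1,1)}`. -/
theorem second_deriv_dominates_high_frequency
    (f : ℝ → ℂ) (hf : ContDiff ℝ 2 f) (hper : ∀ x : ℝ, f (x + 2) = f x)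
    (R : ℕ) (hR : 0 < R)
    (hlow : ∀ m : ℤ, |m| ≤ (R : ℤ) →
      ∫ x in (-1 : ℝ)..1,
        f x * Complex.exp (-(Complex.I * (Real.pi : ℂ) * (m : ℂ) * (x : ℂ))) = 0) :
    Real.pi ^ 2 * (R : ℝ) ^ 2 * Real.sqrt (∫ x in (-1 : ℝ)..1, ‖f x‖ ^ 2) ≤
      Real.sqrt (∫ x in (-1 : ℝ)..1, ‖iteratedDeriv 2 f x‖ ^ 2) := by
  have hlt : (-1 : ℝ) < 1 := by norm_num
  have hscale : 2 * Real.pi / (1 - -1 : ℝ) = Real.pi := by ring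
  have hends (j : ℕ) : iteratedDeriv j f (-1) = iteratedDeriv j f 1 := by
    convert (iteratedDeriv_periodic hper j (-1)).symm using 2
    norm_num
  have hcoeff (m : ℤ) (hm : |m| < R) : fourierCoeffOn hlt f m = 0 := by
    rw [fourierCoeffOn_eq_integral_mul_exp, hscale, hlow m hm.le, mul_zero]
  simpa only [hscale, mul_pow] using
    second_deriv_dominates_high_frequency_general hlt hf (fun j _ ↦ hends j) hcoeff
end

section
/- (TT-ranks of a sum.) Let d ≥ 1, let n_1,…,n_d be positive integers, and let A and B be real d-dimensional tensors of size n_1×⋯×n_d admitting TT-decompositions A(i_1,…,i_d) = G_1(i_1)⋯G_d(i_d) with TT-ranks r_0,…,r_d (r_0 = r_d = 1) and B(i_1,…,i_d) = F_1(i_1)⋯F_d(i_d) with TT-ranks s_0,…,s_d (s_0 = s_d = 1). Then the tensor A + B (entrywise sum) admits a TT-decomposition with TT-ranks t_0,…,t_d where t_0 = t_d = 1 and t_k = r_k + s_k for 1 ≤ k ≤ d−1. -/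
/-- A `d`-dimensional real tensor `A` (with mode index types `ι k`) is in
TT-format with TT-ranks `r 0, …, r d` if there are cores `G k` assigning to each
index `i_k` an `r_{k-1} × r_k` real matrix, such that every entry of `A` equals
the corresponding product of core matrices; the product is written as a sum over
all tuples of intermediate (rank) indices. -/
def IsTT {d : ℕ} {ι : Fin d → Type} [∀ k, Fintype (ι k)]
    (r : Fin (d + 1) → ℕ) (A : (∀ k, ι k) → ℝ) : Prop :=
  ∃ G : (k : Fin d) → ι k → Matrix (Fin (r k.castSucc)) (Fin (r k.succ)) ℝ,
    ∀ i : ∀ k, ι k,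
      A i = ∑ α : (k : Fin (d + 1)) → Fin (r k),
        ∏ k : Fin d, G k (i k) (α k.castSucc) (α k.succ)

/-!
Putting the cores of `A` and `B` into block-diagonal matrices represents `A + B` with all ranks
added, the two boundary ones included. The first and last cores can then absorb the sums over the
boundary indices, which brings the boundary ranks down to `1`.
-/

open Matrix

section BoundaryVectors

variable {R m m' n n' : Type*}

theorem one_vecMul_replicateRow [NonAssocSemiring R] [Unique m] [Fintype m] (v : n → R) :
    1 ᵥ* replicateRow m v = v := by
  ext q
  simp [vecMul, dotProduct]

theorem replicateCol_mulVec_one [NonAssocSemiring R] [Unique n] [Fintype n] (v : m → R) :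
    replicateCol n v *ᵥ 1 = v := by
  ext p
  simp [mulVec, dotProduct]

theorem sumElim_vecMul_fromBlocks_zero [NonUnitalNonAssocSemiring R] [Fintype m] [Fintype m']
    (v : m → R) (v' : m' → R) (M : Matrix m n R) (N : Matrix m' n' R) :
    Sum.elim v v' ᵥ* fromBlocks M 0 0 N = Sum.elim (v ᵥ* M) (v' ᵥ* N) := by
  simp [vecMul_fromBlocks]

end BoundaryVectors

section MatrixTrain

variable {R : Type*} [CommSemiring R] {d : ℕ}

section

variable {κ κ' : Fin (d + 1) → Type*} [∀ k, Fintype (κ k)] [∀ k, Fintype (κ' k)]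

/-- The product `v M₁ ⋯ M_d w` of a train of matrices with a row vector `v` and a column vector `w`,
written as a sum over the paths `α` of rank indices. An entry of a tensor in TT-format is the case
`v = w = 1`; general boundary vectors make it possible to absorb the matrices one at a time. -/
def trainContraction (v : κ 0 → R) (M : ∀ k : Fin d, Matrix (κ k.castSucc) (κ k.succ) R)
    (w : κ (Fin.last d) → R) : R :=
  ∑ α : ∀ k, κ k, v (α 0) * (∏ k : Fin d, M k (α k.castSucc) (α k.succ)) * w (α (Fin.last d))

theorem trainContraction_submatrix (e : ∀ k, κ' k ≃ κ k) (v : κ 0 → R)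
    (M : ∀ k : Fin d, Matrix (κ k.castSucc) (κ k.succ) R) (w : κ (Fin.last d) → R) :
    trainContraction (v ∘ e 0) (fun k => (M k).submatrix (e k.castSucc) (e k.succ))
      (w ∘ e (Fin.last d)) = trainContraction v M w :=
  Fintype.sum_equiv (Equiv.piCongrRight e) _ _ fun _ => rfl

end

theorem trainContraction_zero {κ : Fin 1 → Type*} [∀ k, Fintype (κ k)] (v w : κ 0 → R)
    (M : ∀ k : Fin 0, Matrix (κ k.castSucc) (κ k.succ) R) :
    trainContraction v M w = v ⬝ᵥ w := by
  refine Fintype.sum_equiv (Equiv.piUnique κ) _ _ fun α => ?_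
  simp

section

variable {κ κ' : Fin (d + 2) → Type*} [∀ k, Fintype (κ k)] [∀ k, Fintype (κ' k)]

theorem trainContraction_eq_vecMul (v : κ 0 → R)
    (M : ∀ k : Fin (d + 1), Matrix (κ k.castSucc) (κ k.succ) R) (w : κ (Fin.last (d + 1)) → R) :
    trainContraction v M w =
      trainContraction (κ := fun k => κ k.succ) (v ᵥ* M 0) (fun k => M k.succ) w := by
  unfold trainContraction
  rw [← (Fin.consEquiv κ).sum_comp, Fintype.sum_prod_type_right]
  refine Finset.sum_congr rfl fun β _ => ?_
  simp only [vecMul, dotProduct, Finset.sum_mul, Fin.prod_univ_succ, ← mul_assoc]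
  rfl

theorem trainContraction_eq_mulVec (v : κ 0 → R)
    (M : ∀ k : Fin (d + 1), Matrix (κ k.castSucc) (κ k.succ) R) (w : κ (Fin.last (d + 1)) → R) :
    trainContraction v M w =
      trainContraction (κ := fun k => κ k.castSucc) v (fun k => M k.castSucc)
        (M (Fin.last d) *ᵥ w) := by
  unfold trainContraction
  rw [← (Fin.snocEquiv κ).sum_comp, Fintype.sum_prod_type_right]
  refine Finset.sum_congr rfl fun β _ => ?_
  simp only [mulVec, dotProduct, Finset.mul_sum, Fin.prod_univ_castSucc, ← mul_assoc]
  refine Finset.sum_congr rfl fun a _ => ?_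
  simp only [Fin.snocEquiv_apply, Fin.succ_last, Fin.snoc_last, Fin.snoc_castSucc,
    Fin.succ_castSucc]
  rfl

/-- The operation on the matrices of a train that replaces the first one by the row of its column
sums, so as to collapse the first rank to `1`. The other rank index types are transported along `e`;
the row is repeated over `κ' 0`, which is meant to be a singleton. -/
def sumFirstRows (e : ∀ k : Fin (d + 1), κ' k.succ ≃ κ k.succ) :
    ∀ k : Fin (d + 1), Matrix (κ k.castSucc) (κ k.succ) R → Matrix (κ' k.castSucc) (κ' k.succ) R :=
  Fin.cases (fun M => replicateRow _ ((1 ᵥ* M) ∘ e 0))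
    fun k M => M.submatrix (e k.castSucc) (e k.succ)

theorem trainContraction_sumFirstRows [Unique (κ' 0)]
    (e : ∀ k : Fin (d + 1), κ' k.succ ≃ κ k.succ)
    (M : ∀ k : Fin (d + 1), Matrix (κ k.castSucc) (κ k.succ) R) :
    trainContraction 1 (fun k => sumFirstRows e k (M k)) 1 = trainContraction 1 M 1 := by
  calc trainContraction 1 (fun k => sumFirstRows e k (M k)) 1
    _ = trainContraction (κ := fun k => κ' k.succ) (1 ᵥ* replicateRow (κ' 0) ((1 ᵥ* M 0) ∘ e 0))
          (fun k => (M k.succ).submatrix (e k.castSucc) (e k.succ)) 1 :=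
      trainContraction_eq_vecMul ..
    _ = trainContraction (κ := fun k => κ k.succ) (1 ᵥ* M 0) (fun k => M k.succ) 1 := by
      rw [one_vecMul_replicateRow]
      exact trainContraction_submatrix (κ := fun k => κ k.succ) e (1 ᵥ* M 0) _ 1
    _ = trainContraction 1 M 1 := (trainContraction_eq_vecMul ..).symm

/-- The operation on the matrices of a train that replaces the last one by the column of its row
sums, so as to collapse the last rank to `1`. The other rank index types are transported along `e`;
the column is repeated over `κ' (Fin.last (d + 1))`, which is meant to be a singleton. -/
def sumLastCols (e : ∀ k : Fin (d + 1), κ' k.castSucc ≃ κ k.castSucc) :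
    ∀ k : Fin (d + 1), Matrix (κ k.castSucc) (κ k.succ) R → Matrix (κ' k.castSucc) (κ' k.succ) R :=
  Fin.lastCases (fun M => replicateCol _ ((M *ᵥ 1) ∘ e (Fin.last d)))
    fun k M => M.submatrix (e k.castSucc) (e k.succ)

theorem trainContraction_sumLastCols [Unique (κ' (Fin.last (d + 1)))]
    (e : ∀ k : Fin (d + 1), κ' k.castSucc ≃ κ k.castSucc)
    (M : ∀ k : Fin (d + 1), Matrix (κ k.castSucc) (κ k.succ) R) :
    trainContraction 1 (fun k => sumLastCols e k (M k)) 1 = trainContraction 1 M 1 := by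
  calc trainContraction 1 (fun k => sumLastCols e k (M k)) 1
    _ = trainContraction (κ := fun k => κ' k.castSucc) 1
          (fun k => (M k.castSucc).submatrix (e k.castSucc) (e k.succ))
          (replicateCol (κ' (Fin.last (d + 1))) ((M (Fin.last d) *ᵥ 1) ∘ e (Fin.last d)) *ᵥ 1) := by
      rw [trainContraction_eq_mulVec]
      simp only [sumLastCols, Fin.lastCases_last, Fin.lastCases_castSucc]
      rfl
    _ = trainContraction (κ := fun k => κ k.castSucc) 1 (fun k => M k.castSucc)
          (M (Fin.last d) *ᵥ 1) := by
      rw [replicateCol_mulVec_one]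
      exact trainContraction_submatrix (κ := fun k => κ k.castSucc) e 1 _ (M (Fin.last d) *ᵥ 1)
    _ = trainContraction 1 M 1 := (trainContraction_eq_mulVec ..).symm

end

theorem trainContraction_fromBlocks {κ μ : Fin (d + 1) → Type*} [∀ k, Fintype (κ k)]
    [∀ k, Fintype (μ k)] (v : κ 0 → R) (v' : μ 0 → R)
    (M : ∀ k : Fin d, Matrix (κ k.castSucc) (κ k.succ) R)
    (N : ∀ k : Fin d, Matrix (μ k.castSucc) (μ k.succ) R)
    (w : κ (Fin.last d) → R) (w' : μ (Fin.last d) → R) :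
    trainContraction (κ := fun k => κ k ⊕ μ k) (Sum.elim v v')
        (fun k => fromBlocks (M k) 0 0 (N k)) (Sum.elim w w') =
      trainContraction v M w + trainContraction v' N w' := by
  induction d with
  | zero =>
    exact (trainContraction_zero ..).trans <| (sumElim_dotProduct_sumElim ..).trans <|
      congrArg₂ _ (trainContraction_zero ..).symm (trainContraction_zero ..).symm
  | succ d ih =>
    rw [trainContraction_eq_vecMul v, trainContraction_eq_vecMul v', ← ih]
    exact (trainContraction_eq_vecMul ..).trans <|
      congrArg (trainContraction · _ _) (sumElim_vecMul_fromBlocks_zero v v' (M 0) (N 0))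

end MatrixTrain

section TensorTrain

variable {d : ℕ}

theorem isTT_iff_trainContraction {ι : Fin d → Type} [∀ k, Fintype (ι k)] {r : Fin (d + 1) → ℕ}
    {A : (∀ k, ι k) → ℝ} :
    IsTT r A ↔ ∃ G : (k : Fin d) → ι k → Matrix (Fin (r k.castSucc)) (Fin (r k.succ)) ℝ,
      ∀ i, A i = trainContraction (κ := fun k => Fin (r k)) 1 (fun k => G k (i k)) 1 := by
  simp [IsTT, trainContraction]

theorem IsTT.add {ι : Fin d → Type} [∀ k, Fintype (ι k)] {r s : Fin (d + 1) → ℕ}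
    {A B : (∀ k, ι k) → ℝ} (hA : IsTT r A) (hB : IsTT s B) : IsTT (r + s) (A + B) := by
  rw [isTT_iff_trainContraction] at hA hB ⊢
  obtain ⟨G, hG⟩ := hA
  obtain ⟨F, hF⟩ := hB
  let e (k : Fin (d + 1)) : Fin ((r + s) k) ≃ Fin (r k) ⊕ Fin (s k) := finSumFinEquiv.symm
  refine ⟨fun k j => (fromBlocks (G k j) 0 0 (F k j)).submatrix (e k.castSucc) (e k.succ),
    fun i => ?_⟩
  rw [Pi.add_apply, hG, hF, ← trainContraction_fromBlocks, ← trainContraction_submatrix e,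
    Sum.elim_one_one, Sum.elim_one_one]
  rfl

variable {ι : Fin (d + 1) → Type} [∀ k, Fintype (ι k)] {r : Fin (d + 2) → ℕ} {A : (∀ k, ι k) → ℝ}

theorem IsTT.update_zero_one (hA : IsTT r A) : IsTT (Function.update r 0 1) A := by
  rw [isTT_iff_trainContraction] at hA ⊢
  obtain ⟨G, hG⟩ := hA
  set r' := Function.update r 0 1
  have : Unique (Fin (r' 0)) := (finCongr (Function.update_self 0 1 r)).unique
  let e (k : Fin (d + 1)) : Fin (r' k.succ) ≃ Fin (r k.succ) :=
    finCongr (Function.update_of_ne k.succ_ne_zero 1 r)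
  exact ⟨fun k j => sumFirstRows (κ := (Fin <| r ·)) (κ' := (Fin <| r' ·)) e k (G k j), fun i =>
    (hG i).trans (trainContraction_sumFirstRows (κ := (Fin <| r ·)) (κ' := (Fin <| r' ·)) e
      fun k => G k (i k)).symm⟩

theorem IsTT.update_last_one (hA : IsTT r A) :
    IsTT (Function.update r (Fin.last (d + 1)) 1) A := by
  rw [isTT_iff_trainContraction] at hA ⊢
  obtain ⟨G, hG⟩ := hA
  set r' := Function.update r (Fin.last (d + 1)) 1
  have : Unique (Fin (r' (Fin.last (d + 1)))) := (finCongr (Function.update_self _ 1 r)).unique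
  let e (k : Fin (d + 1)) : Fin (r' k.castSucc) ≃ Fin (r k.castSucc) :=
    finCongr (Function.update_of_ne k.castSucc_ne_last 1 r)
  exact ⟨fun k j => sumLastCols (κ := (Fin <| r ·)) (κ' := (Fin <| r' ·)) e k (G k j), fun i =>
    (hG i).trans (trainContraction_sumLastCols (κ := (Fin <| r ·)) (κ' := (Fin <| r' ·)) e
      fun k => G k (i k)).symm⟩

end TensorTrain

theorem isTT_add_general {d : ℕ} (hd : 1 ≤ d) {ι : Fin d → Type} [∀ k, Fintype (ι k)]
    {r s : Fin (d + 1) → ℕ} {A B : (∀ k, ι k) → ℝ} (hA : IsTT r A) (hB : IsTT s B) :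
    IsTT (fun k => if k = 0 ∨ k = Fin.last d then 1 else r k + s k) (A + B) := by
  obtain ⟨m, rfl⟩ := Nat.exists_eq_add_of_le' hd
  convert (hA.add hB).update_zero_one.update_last_one using 1
  funext k
  simp only [Function.update_apply, Pi.add_apply]
  grind

/-- the entrywise sum of two TT tensors with ranks `r` and `s`
(with unit boundary ranks) admits a TT-decomposition with boundary ranks 1 and
intermediate ranks `r k + s k`. -/
theorem isTT_add (d : ℕ) (hd : 1 ≤ d) (n : Fin d → ℕ) (hn : ∀ k, 0 < n k)
    (r s : Fin (d + 1) → ℕ)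
    (hr0 : r 0 = 1) (hrd : r (Fin.last d) = 1)
    (hs0 : s 0 = 1) (hsd : s (Fin.last d) = 1)
    (A B : (∀ k, Fin (n k)) → ℝ)
    (hA : IsTT r A) (hB : IsTT s B) :
    IsTT (fun k => if k = 0 ∨ k = Fin.last d then 1 else r k + s k) (A + B) :=
  isTT_add_general hd hA hB
end
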